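/- arXiv:cs/0406008 — 3 statements merged into one kernel-verified Lean document; each statement's English description precedes it below -/
import Mathlib

section
/- Suppose ψ̃ has M vanishing moments. Then for every M times continuously differentiable function f : ℝ → ℝ, every σ > 0 and every θ ∈ ℝ, one has ∫_ℝ f(x) ψ̃(σx − θ) dx = (−1)^M σ^{−M} ∫_ℝ f^{(M)}(x) Ψ_M(σx − θ) dx; in particular both integrands are supported in the window I(σ,θ), so both integrals exist. -/
open MeasureTheory

/-- Iterated antiderivatives of a wavelet: `Psi L ψ 0 = ψ` and
`Psi L ψ (m+1) x = ∫_{-L}^x Psi L ψ m t dt`. -/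
noncomputable def Psi (L : ℝ) (ψ : ℝ → ℝ) : ℕ → ℝ → ℝ
  | 0 => ψ
  | m + 1 => fun x => ∫ t in (-L)..x, Psi L ψ m t

/-! If a compactly supported `ψ` has mean zero, its primitive `∫_{-L}^x ψ` is again supported in
`[-L, L]`, so integrating by parts against `f` leaves no boundary term:
`∫ f ψ = -∫ f' ∫_{-L}^x ψ`. Taking `f = x ^ (k + 1)` shows that each primitive costs exactly one
vanishing moment, hence `M` vanishing moments allow `M` integrations by parts. The dilated and
translated identity follows by the substitution `y = σ x - θ`. -/

open Function Set

section Primitive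

variable {E : Type*} [NormedAddCommGroup E] [NormedSpace ℝ E] {a b : ℝ} {g : ℝ → E}

lemma integral_eq_intervalIntegral_of_support_subset_Icc (hg : support g ⊆ Icc a b) :
    ∫ x, g x = ∫ x in a..b, g x := by
  rcases le_or_gt a b with hab | hba
  · rw [intervalIntegral.integral_of_le hab, ← integral_Icc_eq_integral_Ioc,
      setIntegral_eq_integral_of_forall_compl_eq_zero (support_subset_iff'.1 hg)]
  · obtain rfl : g = 0 := by simpa only [Icc_eq_empty hba.not_ge, subset_empty_iff,
      support_eq_empty_iff] using hg
    simp

lemma support_primitive_subset_Icc (hg : support g ⊆ Icc a b) (hmean : ∫ x, g x = 0) :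
    support (fun x => ∫ t in a..x, g t) ⊆ Icc a b := by
  rw [support_subset_iff']
  intro x hx
  rcases lt_or_ge x a with hxa | hax
  · rw [intervalIntegral.integral_symm, intervalIntegral.integral_of_le hxa.le,
      integral_Ioc_eq_integral_Ioo, neg_eq_zero]
    exact setIntegral_eq_zero_of_forall_eq_zero fun t ht =>
      support_subset_iff'.1 hg t fun ht' => ht.2.not_ge ht'.1
  · have hbx : b ≤ x := le_of_not_ge fun hxb => hx ⟨hax, hxb⟩
    rw [← integral_eq_intervalIntegral_of_support_subset_Icc
      (hg.trans (Icc_subset_Icc_right hbx)), hmean]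

lemma integrable_primitive (hint : Integrable g) (hg : support g ⊆ Icc a b)
    (hmean : ∫ x, g x = 0) : Integrable fun x => ∫ t in a..x, g t :=
  (intervalIntegral.continuous_primitive (fun _ _ => hint.intervalIntegrable) a)
    |>.integrable_of_hasCompactSupport <|
      .of_support_subset_isCompact isCompact_Icc (support_primitive_subset_Icc hg hmean)

end Primitive

lemma integral_mul_eq_neg_integral_deriv_mul_primitive {a b : ℝ} {f g : ℝ → ℝ}
    (hf : AbsolutelyContinuousOnInterval f a b) (hint : Integrable g)
    (hg : support g ⊆ Icc a b) (hmean : ∫ x, g x = 0) :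
    ∫ x, f x * g x = -∫ x, deriv f x * ∫ t in a..x, g t := by
  have hparts := hf.integral_mul_deriv_eq_deriv_mul
    (hint.intervalIntegrable.absolutelyContinuousOnInterval_intervalIntegral left_mem_uIcc)
  have hend : ∫ t in a..b, g t = 0 := by
    rw [← integral_eq_intervalIntegral_of_support_subset_Icc hg, hmean]
  have hderiv : ∀ᵐ x, deriv (fun y => ∫ t in a..y, g t) x = g x := by
    filter_upwards [LocallyIntegrable.ae_hasDerivAt_integral hint.locallyIntegrable]
      with x hx using (hx a).deriv
  calc ∫ x, f x * g x
      = ∫ x in a..b, f x * g x := integral_eq_intervalIntegral_of_support_subset_Icc <|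
        (support_mul_subset_right _ _).trans hg
    _ = ∫ x in a..b, f x * deriv (fun y => ∫ t in a..y, g t) x :=
        intervalIntegral.integral_congr_ae <| hderiv.mono fun x hx _ => by rw [hx]
    _ = -∫ x in a..b, deriv f x * ∫ t in a..x, g t := by
        rw [hparts, hend, intervalIntegral.integral_same, mul_zero, mul_zero, sub_zero, zero_sub]
    _ = -∫ x, deriv f x * ∫ t in a..x, g t := by
        rw [integral_eq_intervalIntegral_of_support_subset_Icc <|
          (support_mul_subset_right _ _).trans (support_primitive_subset_Icc hg hmean)]

/-- An integrable function supported in `[a, b]` with `M` vanishing moments. Integrability,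
rather than boundedness, is all that integration by parts needs. -/
structure IsWavelet (M : ℕ) (a b : ℝ) (ψ : ℝ → ℝ) : Prop where
  integrable : Integrable ψ
  support_subset : support ψ ⊆ Icc a b
  moment_eq_zero : ∀ k < M, ∫ x, x ^ k * ψ x = 0

namespace IsWavelet

variable {M : ℕ} {a b L : ℝ} {f ψ : ℝ → ℝ}

lemma of_bounded (hmeas : AEStronglyMeasurable ψ)
    (hbdd : ∃ B : ℝ, ∀ x, |ψ x| ≤ B) (hsupp : ∀ x, L < |x| → ψ x = 0)
    (hmom : ∀ k < M, ∫ x, x ^ k * ψ x = 0) : IsWavelet M (-L) L ψ := by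
  obtain ⟨B, hB⟩ := hbdd
  have hsub : support ψ ⊆ Icc (-L) L := fun x hx =>
    abs_le.1 (le_of_not_gt fun hLx => hx (hsupp x hLx))
  have hint : IntegrableOn ψ (Icc (-L) L) :=
    Measure.integrableOn_of_bounded measure_Icc_lt_top.ne hmeas (.of_forall hB)
  exact ⟨(integrableOn_iff_integrable_of_support_subset hsub).1 hint, hsub, hmom⟩

lemma integral_eq_zero (hψ : IsWavelet (M + 1) a b ψ) : ∫ x, ψ x = 0 := by
  simpa only [pow_zero, one_mul] using hψ.moment_eq_zero 0 M.succ_pos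

lemma integral_mul_eq_neg (hψ : IsWavelet (M + 1) a b ψ) (hf : ContDiff ℝ 1 f) :
    ∫ x, f x * ψ x = -∫ x, deriv f x * ∫ t in a..x, ψ t :=
  integral_mul_eq_neg_integral_deriv_mul_primitive
    hf.contDiffOn.absolutelyContinuousOnInterval hψ.integrable hψ.support_subset
    hψ.integral_eq_zero

lemma primitive (hψ : IsWavelet (M + 1) a b ψ) :
    IsWavelet M a b fun x => ∫ t in a..x, ψ t where
  integrable := integrable_primitive hψ.integrable hψ.support_subset hψ.integral_eq_zero
  support_subset := support_primitive_subset_Icc hψ.support_subset hψ.integral_eq_zero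
  moment_eq_zero k hk := by
    have hparts := hψ.integral_mul_eq_neg (f := fun x => x ^ (k + 1)) (by fun_prop)
    rw [hψ.moment_eq_zero (k + 1) (Nat.succ_lt_succ hk)] at hparts
    simp only [deriv_pow_field, Nat.add_sub_cancel, mul_assoc, integral_const_mul] at hparts
    exact (mul_eq_zero.1 (neg_eq_zero.1 hparts.symm)).resolve_left
      (Nat.cast_ne_zero.2 k.succ_ne_zero)

lemma mono {N : ℕ} (hψ : IsWavelet N a b ψ) (hMN : M ≤ N) : IsWavelet M a b ψ where
  integrable := hψ.integrable
  support_subset := hψ.support_subset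
  moment_eq_zero k hk := hψ.moment_eq_zero k (hk.trans_le hMN)

lemma psi {m n : ℕ} (hψ : IsWavelet (m + n) (-L) L ψ) :
    IsWavelet n (-L) L (Psi L ψ m) := by
  induction m generalizing n with
  | zero => rwa [zero_add] at hψ
  | succ m ih => exact (ih (n := n + 1) (by rwa [← add_assoc, add_right_comm])).primitive

theorem integral_mul_eq_integral_iteratedDeriv_mul (hψ : IsWavelet M (-L) L ψ)
    (hf : ContDiff ℝ M f) :
    ∫ x, f x * ψ x = (-1) ^ M * ∫ x, iteratedDeriv M f x * Psi L ψ M x := by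
  induction M with
  | zero => simp only [pow_zero, one_mul, iteratedDeriv_zero, Psi]
  | succ M ih =>
    have hf' : ContDiff ℝ 1 (iteratedDeriv M f) := by
      rw [iteratedDeriv_eq_iterate]
      exact ContDiff.iterate_deriv' 1 M (by rwa [add_comm])
    calc ∫ x, f x * ψ x
        = (-1) ^ M * ∫ x, iteratedDeriv M f x * Psi L ψ M x :=
          ih (hψ.mono M.le_succ) (hf.of_le (mod_cast M.le_succ))
      _ = (-1) ^ M * -∫ x, deriv (iteratedDeriv M f) x * Psi L ψ (M + 1) x := by
          rw [hψ.psi.integral_mul_eq_neg hf', Psi]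
      _ = (-1) ^ (M + 1) * ∫ x, iteratedDeriv (M + 1) f x * Psi L ψ (M + 1) x := by
          rw [iteratedDeriv_succ, pow_succ, mul_neg, mul_neg_one, neg_mul]

end IsWavelet

lemma support_mul_comp_mul_sub_subset_uIcc {a b σ : ℝ} {v : ℝ → ℝ}
    (hv : support v ⊆ Icc a b) (hσ : σ ≠ 0) (θ : ℝ) (u : ℝ → ℝ) :
    support (fun x => u x * v (σ * x - θ)) ⊆ uIcc ((θ + a) / σ) ((θ + b) / σ) := by
  intro x hx
  obtain ⟨ha, hb⟩ := hv (right_ne_zero_of_mul hx)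
  rw [← image_div_const_uIcc]
  exact ⟨σ * x, Icc_subset_uIcc ⟨by linarith, by linarith⟩, mul_div_cancel_left₀ x hσ⟩

lemma integrable_mul_comp_mul_sub {a b σ : ℝ} {u v : ℝ → ℝ} (hu : Continuous u)
    (hint : Integrable v) (hv : support v ⊆ Icc a b) (hσ : σ ≠ 0) (θ : ℝ) :
    Integrable fun x => u x * v (σ * x - θ) := by
  have hcomp : Integrable fun x => v (σ * x - θ) :=
    (hint.comp_sub_right θ).comp_mul_left' hσ
  rw [← integrableOn_iff_integrable_of_support_subset
    (support_mul_comp_mul_sub_subset_uIcc hv hσ θ u)]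
  exact hcomp.integrableOn.continuousOn_mul hu.continuousOn isCompact_uIcc

lemma integral_mul_comp_mul_sub {σ : ℝ} (hσ : σ ≠ 0) (θ : ℝ) (u v : ℝ → ℝ) :
    ∫ x, u x * v (σ * x - θ) = |σ⁻¹| * ∫ y, u (σ⁻¹ * (y + θ)) * v y := by
  calc ∫ x, u x * v (σ * x - θ)
      = ∫ x, u (σ⁻¹ * (σ * x - θ + θ)) * v (σ * x - θ) := by
        simp only [sub_add_cancel, inv_mul_cancel_left₀ hσ]
    _ = |σ⁻¹| * ∫ y, u (σ⁻¹ * (y - θ + θ)) * v (y - θ) :=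
        Measure.integral_comp_mul_left (fun y => u (σ⁻¹ * (y - θ + θ)) * v (y - θ)) σ
    _ = |σ⁻¹| * ∫ y, u (σ⁻¹ * (y + θ)) * v y := by
        rw [integral_sub_right_eq_self fun y => u (σ⁻¹ * (y + θ)) * v y]

lemma iteratedDeriv_comp_mul_add {M : ℕ} {f : ℝ → ℝ} (hf : ContDiff ℝ M f) (c θ : ℝ) :
    iteratedDeriv M (fun y => f (c * (y + θ))) =
      fun y => c ^ M * iteratedDeriv M f (c * (y + θ)) := by
  rw [iteratedDeriv_comp_add_const M (fun z => f (c * z)) θ, iteratedDeriv_comp_const_mul hf]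

theorem IsWavelet.integral_mul_comp_mul_sub_eq {M : ℕ} {L σ : ℝ} {f ψ : ℝ → ℝ}
    (hψ : IsWavelet M (-L) L ψ) (hf : ContDiff ℝ M f) (hσ : σ ≠ 0) (θ : ℝ) :
    ∫ x, f x * ψ (σ * x - θ) =
      (-1) ^ M * σ ^ (-(M : ℤ)) * ∫ x, iteratedDeriv M f x * Psi L ψ M (σ * x - θ) := by
  have hcomp : ContDiff ℝ M fun y => f (σ⁻¹ * (y + θ)) := hf.comp (by fun_prop)
  rw [integral_mul_comp_mul_sub hσ, integral_mul_comp_mul_sub hσ,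
    hψ.integral_mul_eq_integral_iteratedDeriv_mul hcomp, iteratedDeriv_comp_mul_add hf]
  simp only [mul_assoc, integral_const_mul, zpow_neg, zpow_natCast, inv_pow]
  ring

theorem rect_wavelet_coef_partial_integration_general {M : ℕ} {L : ℝ} {ψ : ℝ → ℝ}
    (hψ : IsWavelet M (-L) L ψ) {f : ℝ → ℝ} (hf : ContDiff ℝ M f) {σ : ℝ} (hσ : σ ≠ 0) (θ : ℝ) :
    (∀ x ∉ uIcc ((θ - L) / σ) ((θ + L) / σ), f x * ψ (σ * x - θ) = 0) ∧
    (∀ x ∉ uIcc ((θ - L) / σ) ((θ + L) / σ), iteratedDeriv M f x * Psi L ψ M (σ * x - θ) = 0) ∧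
    Integrable (fun x => f x * ψ (σ * x - θ)) ∧
    Integrable (fun x => iteratedDeriv M f x * Psi L ψ M (σ * x - θ)) ∧
    ∫ x, f x * ψ (σ * x - θ) =
      (-1) ^ M * σ ^ (-(M : ℤ)) * ∫ x, iteratedDeriv M f x * Psi L ψ M (σ * x - θ) := by
  have hPsi : IsWavelet 0 (-L) L (Psi L ψ M) := IsWavelet.psi (n := 0) hψ
  exact ⟨support_subset_iff'.1
      (support_mul_comp_mul_sub_subset_uIcc hψ.support_subset hσ θ f),
    support_subset_iff'.1
      (support_mul_comp_mul_sub_subset_uIcc hPsi.support_subset hσ θ (iteratedDeriv M f)),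
    integrable_mul_comp_mul_sub hf.continuous hψ.integrable hψ.support_subset hσ θ,
    integrable_mul_comp_mul_sub (hf.continuous_iteratedDeriv' M) hPsi.integrable
      hPsi.support_subset hσ θ,
    hψ.integral_mul_comp_mul_sub_eq hf hσ θ⟩

/-- If `ψ̃` has `M` vanishing moments then for every `C^M` function `f`, every `σ > 0`
and `θ ∈ ℝ`, `∫ f(x) ψ̃(σx − θ) dx = (−1)^M σ^{−M} ∫ f^{(M)}(x) Ψ_M(σx − θ) dx`; both
integrands are supported in the window `I(σ,θ) = [(θ−L)/σ, (θ+L)/σ]` and both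
integrals exist. -/
theorem rect_wavelet_coef_partial_integration
    (M : ℕ) (hM : 0 < M) (L : ℝ) (hL : 0 < L)
    (ψ : ℝ → ℝ) (hmeas : Measurable ψ) (hbdd : ∃ B : ℝ, ∀ x, |ψ x| ≤ B)
    (hsupp : ∀ x : ℝ, L < |x| → ψ x = 0)
    (hmom : ∀ k : ℕ, k < M → ∫ x : ℝ, x ^ k * ψ x = 0) :
    ∀ f : ℝ → ℝ, ContDiff ℝ M f → ∀ σ : ℝ, 0 < σ → ∀ θ : ℝ,
      (∀ x : ℝ, x ∉ Set.Icc ((θ - L) / σ) ((θ + L) / σ) → f x * ψ (σ * x - θ) = 0) ∧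
      (∀ x : ℝ, x ∉ Set.Icc ((θ - L) / σ) ((θ + L) / σ) →
        iteratedDeriv M f x * Psi L ψ M (σ * x - θ) = 0) ∧
      Integrable (fun x : ℝ => f x * ψ (σ * x - θ)) ∧
      Integrable (fun x : ℝ => iteratedDeriv M f x * Psi L ψ M (σ * x - θ)) ∧
      ∫ x : ℝ, f x * ψ (σ * x - θ) =
        (-1 : ℝ) ^ M * σ ^ (-(M : ℤ)) *
          ∫ x : ℝ, iteratedDeriv M f x * Psi L ψ M (σ * x - θ) := by
  intro f hf σ hσ θ
  rw [← uIcc_of_le (by gcongr; linarith : (θ - L) / σ ≤ (θ + L) / σ)]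
  exact rect_wavelet_coef_partial_integration_general
    (IsWavelet.of_bounded hmeas.aestronglyMeasurable hbdd hsupp hmom) hf hσ.ne' θ
end

section
/- Suppose ψ̃ has M vanishing moments and let p ≥ 1. Then there exists a constant C > 0, depending only on ψ̃, M, L and p, such that for every M times continuously differentiable function f : ℝ → ℝ, every σ > 0 and every θ ∈ ℝ, |∫_ℝ f(x) ψ̃(σx − θ) dx| ≤ C · σ^{−(M+1−1/p)} · ( ∫_{I(σ,θ)} |f^{(M)}(x)|^p dx )^{1/p}. -/
open MeasureTheory

/-!
After centring at `c = θ / σ`, the kernel `x ↦ ψ (σ x - θ)` annihilates the Taylor polynomial of `f`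
of degree `M - 1` at `c`, so `f` may be replaced by its Taylor remainder. On the window the integral
form of the remainder is at most `(L / σ) ^ (M - 1) / (M - 1)!` times the `L¹` norm of `f⁽ᴹ⁾`, which
Hölder's inequality converts to the `Lᵖ` norm at the price of `(2 L / σ) ^ (1 - 1 / p)`. The `L¹`
norm of the kernel contributes the last factor `σ⁻¹`.
-/

section Taylor

variable {E : Type*} [NormedAddCommGroup E] [NormedSpace ℝ E]

theorem iteratedDerivWithin_eq_of_subset {f : ℝ → E} {s t : Set ℝ} {n : ℕ} {x : ℝ} (hst : s ⊆ t)
    (hs : UniqueDiffOn ℝ s) (ht : UniqueDiffOn ℝ t) (hf : ContDiffOn ℝ n f t) (hx : x ∈ s) :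
    iteratedDerivWithin n f s x = iteratedDerivWithin n f t x := by
  simp only [iteratedDerivWithin, iteratedFDerivWithin_subset hst hs ht hf hx]

theorem taylorWithinEval_eq_of_subset {f : ℝ → E} {s t : Set ℝ} {n : ℕ} {x₀ : ℝ} (hst : s ⊆ t)
    (hs : UniqueDiffOn ℝ s) (ht : UniqueDiffOn ℝ t) (hf : ContDiffOn ℝ n f t) (hx₀ : x₀ ∈ s)
    (x : ℝ) : taylorWithinEval f n s x₀ x = taylorWithinEval f n t x₀ x := by
  simp only [taylor_within_apply]
  refine Finset.sum_congr rfl fun k hk => ?_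
  have hkn : k ≤ n := Finset.mem_range_succ_iff.mp hk
  rw [iteratedDerivWithin_eq_of_subset hst hs ht (hf.of_le (mod_cast hkn)) hx₀]

theorem taylorWithinEval_integral_remainder [CompleteSpace E] {f : ℝ → E} {s : Set ℝ} {n : ℕ}
    {x₀ x : ℝ} (hs : UniqueDiffOn ℝ s) (hf : ContDiffOn ℝ (n + 1 : ℕ) f s)
    (hsub : Set.uIcc x₀ x ⊆ s) :
    f x - taylorWithinEval f n s x₀ x =
      ∫ t in x₀..x, ((x - t) ^ n / n.factorial) • iteratedDerivWithin (n + 1) f s t := by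
  rcases eq_or_ne x₀ x with rfl | hne
  · simp only [taylorWithinEval_self, sub_self, intervalIntegral.integral_same]
  have hu : UniqueDiffOn ℝ (Set.uIcc x₀ x) := uniqueDiffOn_uIcc hne
  have hfn : ContDiffOn ℝ n f s := hf.of_le (mod_cast n.le_succ)
  rw [← taylorWithinEval_eq_of_subset hsub hu hs hfn Set.left_mem_uIcc,
    taylor_integral_remainder (hf.mono hsub)]
  refine intervalIntegral.integral_congr fun t ht => ?_
  simp only [iteratedDerivWithin_eq_of_subset hsub hu hs hf ht]

theorem norm_sub_taylorWithinEval_le_integral_uIoc [CompleteSpace E] {f : ℝ → E} {s : Set ℝ}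
    {n : ℕ} {x₀ x : ℝ} (hs : UniqueDiffOn ℝ s) (hf : ContDiffOn ℝ (n + 1 : ℕ) f s)
    (hsub : Set.uIcc x₀ x ⊆ s) :
    ‖f x - taylorWithinEval f n s x₀ x‖ ≤
      |x - x₀| ^ n / n.factorial * ∫ t in Set.uIoc x₀ x, ‖iteratedDerivWithin (n + 1) f s t‖ := by
  have hint : IntegrableOn (fun t => ‖iteratedDerivWithin (n + 1) f s t‖) (Set.uIoc x₀ x) :=
    (((hf.continuousOn_iteratedDerivWithin le_rfl hs).mono hsub).norm.integrableOn_compact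
      isCompact_uIcc).mono_set Set.uIoc_subset_uIcc
  have hkernel : ∀ t ∈ Set.uIoc x₀ x,
      ‖((x - t) ^ n / n.factorial) • iteratedDerivWithin (n + 1) f s t‖ ≤
        |x - x₀| ^ n / n.factorial * ‖iteratedDerivWithin (n + 1) f s t‖ := fun t ht => by
    have hxt : |x - t| ≤ |x - x₀| := Set.abs_sub_right_of_mem_uIcc (Set.uIoc_subset_uIcc ht)
    rw [norm_smul, Real.norm_eq_abs, abs_div, abs_pow, Nat.abs_cast]
    gcongr
  rw [taylorWithinEval_integral_remainder hs hf hsub, intervalIntegral.norm_intervalIntegral_eq,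
    ← integral_const_mul]
  exact norm_integral_le_of_norm_le (hint.const_mul _)
    (ae_restrict_of_forall_mem measurableSet_uIoc hkernel)

theorem norm_sub_taylorWithinEval_le_integral_Icc [CompleteSpace E] {f : ℝ → E} {c r x : ℝ}
    {n : ℕ} (hr : 0 < r) (hf : ContDiffOn ℝ (n + 1 : ℕ) f (Set.Icc (c - r) (c + r)))
    (hx : x ∈ Set.Icc (c - r) (c + r)) :
    ‖f x - taylorWithinEval f n (Set.Icc (c - r) (c + r)) c x‖ ≤
      r ^ n / n.factorial * ∫ t in Set.Icc (c - r) (c + r),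
        ‖iteratedDerivWithin (n + 1) f (Set.Icc (c - r) (c + r)) t‖ := by
  set I := Set.Icc (c - r) (c + r)
  have hI : UniqueDiffOn ℝ I := uniqueDiffOn_Icc (by linarith)
  have hcx : Set.uIcc c x ⊆ I := Set.uIcc_subset_Icc ⟨by linarith, by linarith⟩ hx
  have hxc : |x - c| ≤ r := abs_sub_le_iff.mpr ⟨by linarith [hx.2], by linarith [hx.1]⟩
  have hint : IntegrableOn (fun t => ‖iteratedDerivWithin (n + 1) f I t‖) I :=
    (hf.continuousOn_iteratedDerivWithin le_rfl hI).norm.integrableOn_compact isCompact_Icc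
  calc ‖f x - taylorWithinEval f n I c x‖
    _ ≤ |x - c| ^ n / n.factorial *
          ∫ t in Set.uIoc c x, ‖iteratedDerivWithin (n + 1) f I t‖ :=
        norm_sub_taylorWithinEval_le_integral_uIoc hI hf hcx
    _ ≤ r ^ n / n.factorial * ∫ t in I, ‖iteratedDerivWithin (n + 1) f I t‖ := by
        gcongr
        · exact ae_of_all _ fun t => norm_nonneg _
        · exact Set.uIoc_subset_uIcc.trans hcx

theorem setIntegral_Icc_norm_iteratedDerivWithin_rpow {f : ℝ → E} {M : ℕ} (hf : ContDiff ℝ M f)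
    {a b : ℝ} (hab : a < b) (p : ℝ) :
    ∫ x in Set.Icc a b, ‖iteratedDerivWithin M f (Set.Icc a b) x‖ ^ p =
      ∫ x in Set.Icc a b, ‖iteratedDeriv M f x‖ ^ p :=
  setIntegral_congr_fun measurableSet_Icc fun x hx => by
    simp only [iteratedDerivWithin_eq_iteratedDeriv (uniqueDiffOn_Icc hab) hf.contDiffAt hx]

end Taylor

section Integral

variable {α : Type*} [MeasurableSpace α] {μ : Measure α}
  {E : Type*} [NormedAddCommGroup E]

theorem integral_norm_le_measureReal_univ_rpow_mul [IsFiniteMeasure μ] {p : ℝ} (hp : 1 ≤ p)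
    {g : α → E} (hg : MemLp g (ENNReal.ofReal p) μ) :
    ∫ x, ‖g x‖ ∂μ ≤ μ.real Set.univ ^ (1 - 1 / p) * (∫ x, ‖g x‖ ^ p ∂μ) ^ (1 / p) := by
  rcases hp.eq_or_lt with rfl | hp1
  · simp only [Real.rpow_one, div_one, sub_self, Real.rpow_zero, one_mul, le_refl]
  have hpq := Real.HolderConjugate.conjExponent hp1
  have hexp : 1 / p.conjExponent = 1 - 1 / p := by
    have := hpq.inv_add_inv_eq_one
    simp only [one_div]
    linarith
  have holder := integral_mul_norm_le_Lp_mul_Lq hpq hg.norm (memLp_const (1 : ℝ))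
  simpa only [norm_norm, norm_one, mul_one, Real.one_rpow, integral_const, smul_eq_mul, hexp,
    mul_comm (_ ^ (1 / p))] using holder

theorem setIntegral_norm_Icc_le_rpow_mul {a b p : ℝ} (hab : a ≤ b) (hp : 1 ≤ p) {g : ℝ → E}
    (hg : ContinuousOn g (Set.Icc a b)) :
    ∫ x in Set.Icc a b, ‖g x‖ ≤
      (b - a) ^ (1 - 1 / p) * (∫ x in Set.Icc a b, ‖g x‖ ^ p) ^ (1 / p) := by
  obtain ⟨B, hB⟩ := isCompact_Icc.exists_bound_of_continuousOn hg
  have hLp : MemLp g (ENNReal.ofReal p) (volume.restrict (Set.Icc a b)) :=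
    MemLp.of_bound (hg.aestronglyMeasurable_of_isCompact isCompact_Icc measurableSet_Icc) B
      (ae_restrict_of_forall_mem measurableSet_Icc hB)
  simpa only [measureReal_restrict_apply_univ, Real.volume_real_Icc_of_le hab] using
    integral_norm_le_measureReal_univ_rpow_mul hp hLp

variable [NormedSpace ℝ E]

theorem integral_comp_mul_sub (F : ℝ → E) (σ θ : ℝ) :
    ∫ x, F (σ * x - θ) = |σ⁻¹| • ∫ y, F y := by
  rw [Measure.integral_comp_mul_left (fun y => F (y - θ)) σ, integral_sub_right_eq_self]

theorem integrable_smul_of_continuousOn {X : Type*} [TopologicalSpace X] [T2Space X]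
    [MeasurableSpace X] [OpensMeasurableSpace X] [SecondCountableTopologyEither X E]
    {ν : Measure X} {w : X → ℝ} {g : X → E} {K : Set X} (hK : IsCompact K)
    (hw : Integrable w ν) (hwK : ∀ x ∉ K, w x = 0) (hg : ContinuousOn g K) :
    Integrable (fun x => w x • g x) ν :=
  (hw.integrableOn.smul_continuousOn hg hK).integrable_of_forall_notMem_eq_zero fun x hx => by
    rw [hwK x hx, zero_smul]

end Integral

/-- The moments of `ψ` about `c` of all orders `k < M` vanish; for `c = 0` this is the usual
condition on a wavelet. The centre is a parameter so that the rescaled kernels `x ↦ ψ (σ x - θ)` are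
covered without expanding binomials. Integrability of the moments is not part of the definition:
a divergent one counts as zero. -/
def HasVanishingMomentsAt (ψ : ℝ → ℝ) (c : ℝ) (M : ℕ) : Prop :=
  ∀ k < M, ∫ x, (x - c) ^ k * ψ x = 0

namespace HasVanishingMomentsAt

theorem comp_mul_sub {ψ : ℝ → ℝ} {c : ℝ} {M : ℕ} (h : HasVanishingMomentsAt ψ c M) {σ : ℝ}
    (hσ : σ ≠ 0) (θ : ℝ) :
    HasVanishingMomentsAt (fun x => ψ (σ * x - θ)) ((c + θ) / σ) M := by
  intro k hk
  have hcentre (x : ℝ) : x - (c + θ) / σ = σ⁻¹ * (σ * x - θ - c) := by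
    field_simp
    ring
  simp only [hcentre, mul_pow, mul_assoc]
  rw [integral_const_mul, integral_comp_mul_sub (fun y => (y - c) ^ k * ψ y), h k hk, smul_zero,
    mul_zero]

variable {E : Type*} [NormedAddCommGroup E] [NormedSpace ℝ E] [CompleteSpace E]
  {w : ℝ → ℝ} {c r : ℝ} {n : ℕ}

theorem integral_smul_taylorWithinEval_eq_zero (h : HasVanishingMomentsAt w c (n + 1))
    (hint : ∀ k ≤ n, Integrable fun x => (x - c) ^ k * w x) (f : ℝ → E) (s : Set ℝ) :
    ∫ x, w x • taylorWithinEval f n s c x = 0 := by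
  have hterm (x : ℝ) : w x • taylorWithinEval f n s c x =
      ∑ k ∈ Finset.range (n + 1),
        ((x - c) ^ k * w x) • ((k.factorial : ℝ)⁻¹ • iteratedDerivWithin k f s c) := by
    simp only [taylor_within_apply, Finset.smul_sum, smul_smul]
    exact Finset.sum_congr rfl fun k _ => by ring_nf
  simp only [hterm]
  rw [integral_finsetSum _ fun k hk => (hint k (Finset.mem_range_succ_iff.mp hk)).smul_const _]
  refine Finset.sum_eq_zero fun k hk => ?_
  rw [integral_smul_const, h k (Finset.mem_range.mp hk), zero_smul]

theorem norm_integral_smul_le {f : ℝ → E} (h : HasVanishingMomentsAt w c (n + 1))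
    (hw : Integrable w) (hr : 0 < r) (hwr : ∀ x ∉ Set.Icc (c - r) (c + r), w x = 0)
    (hf : ContDiffOn ℝ (n + 1 : ℕ) f (Set.Icc (c - r) (c + r))) :
    ‖∫ x, w x • f x‖ ≤ (∫ x, |w x|) * (r ^ n / n.factorial *
      ∫ t in Set.Icc (c - r) (c + r),
        ‖iteratedDerivWithin (n + 1) f (Set.Icc (c - r) (c + r)) t‖) := by
  set I := Set.Icc (c - r) (c + r)
  set P := taylorWithinEval f n I c
  set R := r ^ n / n.factorial * ∫ t in I, ‖iteratedDerivWithin (n + 1) f I t‖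
  have hP : Continuous P := by
    simp only [P, funext (taylor_within_apply f n I c)]
    fun_prop
  have hmoment (k : ℕ) : Integrable fun x => (x - c) ^ k * w x := by
    simpa only [smul_eq_mul, mul_comm] using
      integrable_smul_of_continuousOn isCompact_Icc hw hwr (g := fun x => (x - c) ^ k) (by fun_prop)
  have hsub : ∫ x, w x • f x = ∫ x, w x • (f x - P x) := by
    simp only [smul_sub]
    rw [integral_sub (integrable_smul_of_continuousOn isCompact_Icc hw hwr hf.continuousOn)
        (integrable_smul_of_continuousOn isCompact_Icc hw hwr hP.continuousOn),
      h.integral_smul_taylorWithinEval_eq_zero (fun k _ => hmoment k), sub_zero]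
  have hbound (x : ℝ) : ‖w x • (f x - P x)‖ ≤ |w x| * R := by
    rw [norm_smul, Real.norm_eq_abs]
    by_cases hx : x ∈ I
    · exact mul_le_mul_of_nonneg_left (norm_sub_taylorWithinEval_le_integral_Icc hr hf hx)
        (abs_nonneg _)
    · simp only [hwr x hx, abs_zero, zero_mul, le_refl]
  rw [hsub, ← integral_mul_const]
  exact norm_integral_le_of_norm_le (hw.abs.mul_const R) (ae_of_all _ hbound)

theorem norm_integral_smul_le_rpow {f : ℝ → E} (h : HasVanishingMomentsAt w c (n + 1))
    (hw : Integrable w) (hr : 0 < r) (hwr : ∀ x ∉ Set.Icc (c - r) (c + r), w x = 0)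
    (hf : ContDiffOn ℝ (n + 1 : ℕ) f (Set.Icc (c - r) (c + r))) {p : ℝ} (hp : 1 ≤ p) :
    ‖∫ x, w x • f x‖ ≤ (∫ x, |w x|) * (r ^ n / n.factorial * ((2 * r) ^ (1 - 1 / p) *
      (∫ t in Set.Icc (c - r) (c + r),
        ‖iteratedDerivWithin (n + 1) f (Set.Icc (c - r) (c + r)) t‖ ^ p) ^ (1 / p))) := by
  have hlt : c - r < c + r := by linarith
  have holder := setIntegral_norm_Icc_le_rpow_mul hlt.le hp
    (hf.continuousOn_iteratedDerivWithin le_rfl (uniqueDiffOn_Icc hlt))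
  rw [show c + r - (c - r) = 2 * r by ring] at holder
  refine (h.norm_integral_smul_le hw hr hwr hf).trans ?_
  gcongr

end HasVanishingMomentsAt

theorem lt_abs_mul_sub_of_notMem_Icc {σ : ℝ} (hσ : 0 < σ) {L θ x : ℝ}
    (hx : x ∉ Set.Icc ((θ - L) / σ) ((θ + L) / σ)) : L < |σ * x - θ| := by
  contrapose! hx
  obtain ⟨hlo, hhi⟩ := abs_le.mp hx
  exact ⟨(div_le_iff₀' hσ).mpr (by linarith), (le_div_iff₀' hσ).mpr (by linarith)⟩

theorem inv_mul_div_pow_mul_div_rpow {σ a b : ℝ} (hσ : 0 < σ) (hb : 0 ≤ b) (n : ℕ) (q : ℝ) :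
    σ⁻¹ * ((a / σ) ^ n * (b / σ) ^ q) = a ^ n * b ^ q * σ ^ (-((n + 1 : ℕ) + q)) := by
  rw [div_pow, Real.div_rpow hb hσ.le, Real.rpow_neg hσ.le, Real.rpow_add hσ, Real.rpow_natCast,
    pow_succ]
  field_simp

section Rescaled

variable {E : Type*} [NormedAddCommGroup E] [NormedSpace ℝ E] [CompleteSpace E]

theorem norm_integral_comp_mul_sub_smul_le {ψ : ℝ → ℝ} {n : ℕ} {L p σ : ℝ}
    (hmom : HasVanishingMomentsAt ψ 0 (n + 1)) (hψ : Integrable ψ) (hL : 0 < L)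
    (hsupp : ∀ x, L < |x| → ψ x = 0) (hp : 1 ≤ p) (hσ : 0 < σ) (θ : ℝ) {f : ℝ → E}
    (hf : ContDiffOn ℝ (n + 1 : ℕ) f (Set.Icc ((θ - L) / σ) ((θ + L) / σ))) :
    ‖∫ x, ψ (σ * x - θ) • f x‖ ≤
      (∫ x, |ψ x|) * (L ^ n * (2 * L) ^ (1 - 1 / p) / n.factorial) *
        σ ^ (-(((n + 1 : ℕ) : ℝ) + 1 - 1 / p)) *
        (∫ x in Set.Icc ((θ - L) / σ) ((θ + L) / σ),
          ‖iteratedDerivWithin (n + 1) f (Set.Icc ((θ - L) / σ) ((θ + L) / σ)) x‖ ^ p) ^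
            (1 / p) := by
  have hwI (x : ℝ) (hx : x ∉ Set.Icc ((θ - L) / σ) ((θ + L) / σ)) : ψ (σ * x - θ) = 0 :=
    hsupp _ (lt_abs_mul_sub_of_notMem_Icc hσ hx)
  have hw : Integrable fun x => ψ (σ * x - θ) :=
    (hψ.comp_sub_right θ).comp_mul_left' hσ.ne'
  have hmom_centre : HasVanishingMomentsAt (fun x => ψ (σ * x - θ)) (θ / σ) (n + 1) := by
    simpa only [zero_add] using hmom.comp_mul_sub hσ.ne' θ
  have hnorm : ∫ x, |ψ (σ * x - θ)| = σ⁻¹ * ∫ x, |ψ x| := by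
    rw [integral_comp_mul_sub (fun y => |ψ y|), abs_of_pos (inv_pos.mpr hσ), smul_eq_mul]
  rw [sub_div, add_div] at hf hwI ⊢
  refine (hmom_centre.norm_integral_smul_le_rpow hw (div_pos hL hσ) hwI hf hp).trans_eq ?_
  have hscale := inv_mul_div_pow_mul_div_rpow (a := L) hσ (by positivity : 0 ≤ 2 * L) n (1 - 1 / p)
  rw [← add_sub_assoc] at hscale
  rw [hnorm, ← mul_div_assoc 2 L σ]
  linear_combination (∫ x, |ψ x|) / n.factorial *
    (∫ x in Set.Icc (θ / σ - L / σ) (θ / σ + L / σ),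
      ‖iteratedDerivWithin (n + 1) f (Set.Icc (θ / σ - L / σ) (θ / σ + L / σ)) x‖ ^ p) ^ (1 / p) *
    hscale

theorem rect_wavelet_coef_upper_bound_general {M : ℕ} (hM : 0 < M) {L : ℝ} (hL : 0 < L)
    {p : ℝ} (hp : 1 ≤ p) {ψ : ℝ → ℝ} (hψ : Integrable ψ)
    (hsupp : ∀ x : ℝ, L < |x| → ψ x = 0) (hmom : HasVanishingMomentsAt ψ 0 M) :
    ∃ C : ℝ, 0 < C ∧ ∀ f : ℝ → E, ∀ σ : ℝ, 0 < σ → ∀ θ : ℝ,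
      ContDiffOn ℝ M f (Set.Icc ((θ - L) / σ) ((θ + L) / σ)) →
        ‖∫ x, ψ (σ * x - θ) • f x‖ ≤
          C * σ ^ (-((M : ℝ) + 1 - 1 / p)) *
            (∫ x in Set.Icc ((θ - L) / σ) ((θ + L) / σ),
              ‖iteratedDerivWithin M f (Set.Icc ((θ - L) / σ) ((θ + L) / σ)) x‖ ^ p) ^
                (1 / p) := by
  obtain ⟨n, rfl⟩ := Nat.exists_eq_add_one_of_ne_zero hM.ne'
  refine ⟨(∫ x, |ψ x|) * (L ^ n * (2 * L) ^ (1 - 1 / p) / n.factorial) + 1, by positivity,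
    fun f σ hσ θ hf => ?_⟩
  refine (norm_integral_comp_mul_sub_smul_le hmom hψ hL hsupp hp hσ θ hf).trans ?_
  gcongr
  exact le_add_of_nonneg_right zero_le_one

end Rescaled

/-- For a wavelet `ψ̃` with `M` dual vanishing moments and `p ≥ 1` there is a constant
`C > 0` (depending only on `ψ̃, M, L, p`) such that for every `C^M` function `f`,
every `σ > 0` and `θ ∈ ℝ`,
`|∫ f(x) ψ̃(σx − θ) dx| ≤ C σ^{−(M+1−1/p)} (∫_{I(σ,θ)} |f^{(M)}|^p)^{1/p}`. -/
theorem rect_wavelet_coef_upper_bound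
    (M : ℕ) (hM : 0 < M) (L : ℝ) (hL : 0 < L) (p : ℝ) (hp : 1 ≤ p)
    (ψ : ℝ → ℝ) (hmeas : Measurable ψ) (hbdd : ∃ B : ℝ, ∀ x, |ψ x| ≤ B)
    (hsupp : ∀ x : ℝ, L < |x| → ψ x = 0)
    (hmom : ∀ k : ℕ, k < M → ∫ x : ℝ, x ^ k * ψ x = 0) :
    ∃ C : ℝ, 0 < C ∧
      ∀ f : ℝ → ℝ, ContDiff ℝ M f → ∀ σ : ℝ, 0 < σ → ∀ θ : ℝ,
        |∫ x : ℝ, f x * ψ (σ * x - θ)| ≤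
          C * σ ^ (-((M : ℝ) + 1 - 1 / p)) *
            (∫ x in Set.Icc ((θ - L) / σ) ((θ + L) / σ),
              |iteratedDeriv M f x| ^ p) ^ (1 / p) := by
  obtain ⟨B, hB⟩ := hbdd
  have hψ : Integrable ψ :=
    (Measure.integrableOn_of_bounded (s := Set.Icc (-L) L) measure_Icc_lt_top.ne
      hmeas.aestronglyMeasurable (ae_of_all _ hB)).integrable_of_forall_notMem_eq_zero
      fun x hx => hsupp x (not_le.mp (mt abs_le.mp hx))
  obtain ⟨C, hC, hbound⟩ := rect_wavelet_coef_upper_bound_general (E := ℝ) hM hL hp hψ hsupp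
    (by simpa only [HasVanishingMomentsAt, sub_zero] using hmom)
  refine ⟨C, hC, fun f hf σ hσ θ => ?_⟩
  have hwindow : (θ - L) / σ < (θ + L) / σ := by gcongr; linarith
  have hfθ := hbound f σ hσ θ hf.contDiffOn
  rw [setIntegral_Icc_norm_iteratedDerivWithin_rpow hf hwindow] at hfθ
  simpa only [smul_eq_mul, mul_comm (ψ _), Real.norm_eq_abs] using hfθ
end

section
/- Suppose ψ̃ has M vanishing moments but does not have M+1 vanishing moments (i.e. ∫_ℝ x^M ψ̃(x) dx ≠ 0), and let p ≥ 1. Then there exist a constant C > 0 and an M times continuously differentiable function f : ℝ → ℝ (one may take f(x) = x^M / M!) such that for every σ > 0 and every θ ∈ ℝ, |∫_ℝ f(x) ψ̃(σx − θ) dx| ≥ (1/C) · σ^{−(M+1−1/p)} · ( ∫_{I(σ,θ)} |f^{(M)}(x)|^p dx )^{1/p}. -/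
open MeasureTheory

/-!
Tested against a degree-`M` polynomial, `ψ` only sees the leading coefficient. Take
`f x = x ^ M / M!`. The substitution `y = σ x - θ` turns `f x` into `σ⁻ᴹ (y + θ) ^ M / M!`, whose
leading coefficient does not depend on `θ`, so `∫ f(x) ψ(σx - θ) dx` is the `M`-th moment of `ψ`
divided by `M! σᴹ⁺¹`. On the other side `f⁽ᴹ⁾ = 1`, so the `Lᵖ` norm over the window is
`(2L / σ) ^ (1 / p)`. Both sides are thus constant multiples of `σ ^ (-(M + 1))`, and for the right
`C` they are equal.
-/

open Polynomial Set

open scoped Nat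

theorem integrable_continuous_smul_of_hasCompactSupport_of_norm_le
    {X E : Type*} [TopologicalSpace X] [T2Space X] [MeasurableSpace X] [OpensMeasurableSpace X]
    [NormedAddCommGroup E] [NormedSpace ℝ E] {μ : Measure X} [IsFiniteMeasureOnCompacts μ]
    {g : X → ℝ} {ψ : X → E} {B : ℝ}
    (hg : Continuous g) (hψ : AEStronglyMeasurable ψ μ) (hcomp : HasCompactSupport ψ)
    (hB : ∀ x, ‖ψ x‖ ≤ B) : Integrable (fun x => g x • ψ x) μ := by
  have hon : IntegrableOn ψ (tsupport ψ) μ :=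
    Measure.integrableOn_of_bounded hcomp.measure_lt_top.ne hψ (ae_of_all _ hB)
  have hsub : Function.support (fun x => g x • ψ x) ⊆ tsupport ψ :=
    (Function.support_smul_subset_right g ψ).trans (subset_tsupport ψ)
  exact (integrableOn_iff_integrable_of_support_subset hsub).mp
    (hon.continuousOn_smul hg.continuousOn hcomp)

theorem iteratedDeriv_pow_div_factorial {𝕜 : Type*} [NontriviallyNormedField 𝕜] [CharZero 𝕜]
    (n : ℕ) (x : 𝕜) : iteratedDeriv n (fun x : 𝕜 => x ^ n / n !) x = 1 := by
  have hfac : (n ! : 𝕜) ≠ 0 := Nat.cast_ne_zero.mpr n.factorial_ne_zero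
  simp only [div_eq_mul_inv, iteratedDeriv_mul_const_field, iteratedDeriv_pow,
    Nat.descFactorial_self, Nat.sub_self, pow_zero, mul_one, mul_inv_cancel₀ hfac]

theorem setIntegral_window_abs_iteratedDeriv_rpow (n : ℕ) {L σ : ℝ} (hL : 0 ≤ L) (hσ : 0 < σ)
    (θ p : ℝ) :
    ∫ x in Icc ((θ - L) / σ) ((θ + L) / σ),
      |iteratedDeriv n (fun x : ℝ => x ^ n / n !) x| ^ p = 2 * L / σ := by
  have hle : (θ - L) / σ ≤ (θ + L) / σ := by gcongr; linarith
  simp only [iteratedDeriv_pow_div_factorial, abs_one, Real.one_rpow, setIntegral_const,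
    Real.volume_real_Icc_of_le hle, smul_eq_mul, mul_one]
  ring

theorem rpow_neg_sub_mul_div_rpow {σ a : ℝ} (hσ : 0 < σ) (ha : 0 ≤ a) (s q : ℝ) :
    σ ^ (-(s - q)) * (a / σ) ^ q = a ^ q * σ ^ (-s) := by
  rw [neg_sub, sub_eq_add_neg, Real.rpow_add hσ, Real.div_rpow ha hσ.le]
  have : σ ^ q ≠ 0 := (Real.rpow_pos_of_pos hσ q).ne'
  field_simp

variable {E : Type*} [NormedAddCommGroup E] [NormedSpace ℝ E]

theorem integral_smul_comp_mul_sub (f : ℝ → ℝ) (ψ : ℝ → E) {σ : ℝ} (hσ : σ ≠ 0) (θ : ℝ) :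
    ∫ x, f x • ψ (σ * x - θ) = |σ⁻¹| • ∫ y, f ((y + θ) / σ) • ψ y := by
  calc ∫ x, f x • ψ (σ * x - θ)
      = ∫ x, f (σ * x / σ) • ψ (σ * x - θ) := by simp only [mul_div_cancel_left₀ _ hσ]
    _ = |σ⁻¹| • ∫ z, f (z / σ) • ψ (z - θ) :=
        Measure.integral_comp_mul_left (fun z => f (z / σ) • ψ (z - θ)) σ
    _ = |σ⁻¹| • ∫ y, f ((y + θ) / σ) • ψ y := by
        rw [← integral_add_right_eq_self _ θ]
        simp only [add_sub_cancel_right]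

/-- `ψ` has `M` vanishing moments: it is orthogonal to every monomial of degree less than `M`.
Integrability of each moment is required, since the Bochner integral of a nonintegrable function is
zero by convention. -/
def HasVanishingMoments (ψ : ℝ → E) (M : ℕ) : Prop :=
  ∀ k < M, Integrable (fun x => x ^ k • ψ x) ∧ ∫ x, x ^ k • ψ x = 0

namespace HasVanishingMoments

variable {ψ : ℝ → E} {M : ℕ}

theorem integral_eval_smul (hψ : HasVanishingMoments ψ M)
    (hint : Integrable (fun x => x ^ M • ψ x)) {P : ℝ[X]} (hP : P.natDegree ≤ M) :
    ∫ x, P.eval x • ψ x = P.coeff M • ∫ x, x ^ M • ψ x := by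
  have hint_le : ∀ k ∈ Finset.range (M + 1), Integrable (fun x => P.coeff k • x ^ k • ψ x) := by
    intro k hk
    obtain hlt | rfl := (Finset.mem_range_succ_iff.mp hk).lt_or_eq
    · exact (hψ k hlt).1.smul _
    · exact hint.smul _
  calc ∫ x, P.eval x • ψ x
      = ∫ x, ∑ k ∈ Finset.range (M + 1), P.coeff k • x ^ k • ψ x := by
        simp only [eval_eq_sum_range' (Nat.lt_succ_of_le hP), Finset.sum_smul, mul_smul]
    _ = ∑ k ∈ Finset.range (M + 1), P.coeff k • ∫ x, x ^ k • ψ x := by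
        simp only [integral_finsetSum _ hint_le, integral_smul]
    _ = P.coeff M • ∫ x, x ^ M • ψ x := by
        rw [Finset.sum_range_succ, add_eq_right]
        refine Finset.sum_eq_zero fun k hk => ?_
        rw [(hψ k (Finset.mem_range.mp hk)).2, smul_zero]

theorem integral_add_pow_smul (hψ : HasVanishingMoments ψ M)
    (hint : Integrable (fun x => x ^ M • ψ x)) (θ : ℝ) :
    ∫ x, (x + θ) ^ M • ψ x = ∫ x, x ^ M • ψ x := by
  simpa [coeff_X_add_C_pow] using
    hψ.integral_eval_smul hint (P := (X + C θ) ^ M) (natDegree_pow_X_add_C M θ).le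

theorem integral_pow_smul_comp_mul_sub (hψ : HasVanishingMoments ψ M)
    (hint : Integrable (fun x => x ^ M • ψ x)) {σ : ℝ} (hσ : σ ≠ 0) (θ : ℝ) :
    ∫ x, x ^ M • ψ (σ * x - θ) = (|σ⁻¹| * (σ ^ M)⁻¹) • ∫ x, x ^ M • ψ x := by
  rw [integral_smul_comp_mul_sub (fun x => x ^ M) ψ hσ, mul_smul, ← hψ.integral_add_pow_smul hint θ,
    ← integral_smul (σ ^ M)⁻¹]
  simp only [div_eq_inv_mul, mul_pow, inv_pow, mul_smul]

theorem norm_integral_pow_div_factorial_smul (hψ : HasVanishingMoments ψ M)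
    (hint : Integrable (fun x => x ^ M • ψ x)) {σ : ℝ} (hσ : 0 < σ) (θ : ℝ) :
    ‖∫ x, (x ^ M / M ! : ℝ) • ψ (σ * x - θ)‖ =
      ‖∫ x, x ^ M • ψ x‖ / M ! * σ ^ (-((M : ℝ) + 1)) := by
  have hpow : σ ^ (-((M : ℝ) + 1)) = σ⁻¹ * (σ ^ M)⁻¹ := by
    rw [Real.rpow_neg hσ.le, Real.rpow_add_one hσ.ne', Real.rpow_natCast, mul_inv_rev]
  simp only [div_eq_inv_mul, mul_smul, integral_smul,
    hψ.integral_pow_smul_comp_mul_sub hint hσ.ne', norm_smul, norm_inv, norm_pow,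
    Real.norm_natCast, Real.norm_of_nonneg hσ.le, abs_of_pos (inv_pos.mpr hσ), hpow]
  ring

end HasVanishingMoments

theorem rect_wavelet_coef_lower_bound_general
    {M : ℕ} {L : ℝ} (hL : 0 < L) {p : ℝ} (_hp : p ≠ 0) {ψ : ℝ → E}
    (hmom : HasVanishingMoments ψ M) (hlastmom : (∫ x, x ^ M • ψ x) ≠ 0) :
    ∃ C : ℝ, 0 < C ∧ ∀ σ : ℝ, 0 < σ → ∀ θ : ℝ,
      ‖∫ x, (x ^ M / M ! : ℝ) • ψ (σ * x - θ)‖ =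
        (1 / C) * σ ^ (-((M : ℝ) + 1 - 1 / p)) *
          (∫ x in Icc ((θ - L) / σ) ((θ + L) / σ),
            |iteratedDeriv M (fun x : ℝ => x ^ M / M !) x| ^ p) ^ (1 / p) := by
  refine ⟨M ! * (2 * L) ^ (1 / p) / ‖∫ x, x ^ M • ψ x‖, by positivity, fun σ hσ θ => ?_⟩
  have h2L : (2 * L) ^ (1 / p) ≠ 0 := by positivity
  rw [hmom.norm_integral_pow_div_factorial_smul (.of_integral_ne_zero hlastmom) hσ,
    setIntegral_window_abs_iteratedDeriv_rpow M hL.le hσ, mul_assoc,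
    rpow_neg_sub_mul_div_rpow hσ (by positivity)]
  field_simp

/-- If `ψ̃` has `M` vanishing moments but not `M+1` (i.e. `∫ x^M ψ̃(x) dx ≠ 0`) and
`p ≥ 1`, then there are a constant `C > 0` and a `C^M` function `f` (one may take
`f(x) = x^M / M!`) such that for all `σ > 0` and `θ ∈ ℝ`,
`|∫ f(x) ψ̃(σx − θ) dx| ≥ (1/C) σ^{−(M+1−1/p)} (∫_{I(σ,θ)} |f^{(M)}|^p)^{1/p}`. -/
theorem rect_wavelet_coef_lower_bound
    (M : ℕ) (hM : 0 < M) (L : ℝ) (hL : 0 < L) (p : ℝ) (hp : 1 ≤ p)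
    (ψ : ℝ → ℝ) (hmeas : Measurable ψ) (hbdd : ∃ B : ℝ, ∀ x, |ψ x| ≤ B)
    (hsupp : ∀ x : ℝ, L < |x| → ψ x = 0)
    (hmom : ∀ k : ℕ, k < M → ∫ x : ℝ, x ^ k * ψ x = 0)
    (hlastmom : (∫ x : ℝ, x ^ M * ψ x) ≠ 0) :
    ∃ C : ℝ, 0 < C ∧ ∃ f : ℝ → ℝ, ContDiff ℝ M f ∧
      ∀ σ : ℝ, 0 < σ → ∀ θ : ℝ,
        |∫ x : ℝ, f x * ψ (σ * x - θ)| ≥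
          (1 / C) * σ ^ (-((M : ℝ) + 1 - 1 / p)) *
            (∫ x in Set.Icc ((θ - L) / σ) ((θ + L) / σ),
              |iteratedDeriv M f x| ^ p) ^ (1 / p) := by
  obtain ⟨B, hB⟩ := hbdd
  have hcomp : HasCompactSupport ψ := .intro isCompact_Icc fun x hx =>
    hsupp x (not_le.mp fun h => hx (abs_le.mp h))
  have hvanish : HasVanishingMoments ψ M := fun k hk =>
    ⟨integrable_continuous_smul_of_hasCompactSupport_of_norm_le (continuous_pow k)
      hmeas.aestronglyMeasurable hcomp hB, hmom k hk⟩
  obtain ⟨C, hC, heq⟩ := rect_wavelet_coef_lower_bound_general hL (by linarith) hvanish hlastmom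
  exact ⟨C, hC, fun x => x ^ M / M !, by fun_prop, fun σ hσ θ => (heq σ hσ θ).ge⟩
end
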